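/- arXiv:1907.07019 — 2 statements merged into one kernel-verified Lean document; each statement's English description precedes it below -/
import Mathlib

section
/- Suppose that for all real numbers a, b ≥ 0 and all E, F ∈ Σ₀, if a·π₀(F) ≥ b·π₀(E) and b·π₁(E) > a·π₁(F), then there exists G ∈ Σ₁ with G ⊆ F, π₁(G) = 0, and π₀*(G) > 0. Then π₁ is commensurate to π₀. -/
open MeasureTheory Set ENNReal

/-- The support of a measure `π` on `(Ω, m)`: the intersection of all `m`-measurable
sets of `π`-measure one. -/
def spt {Ω : Type*} (m : MeasurableSpace Ω) (π : @Measure Ω m) : Set Ω :=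
  ⋂₀ {E : Set Ω | @MeasurableSet Ω m E ∧ π E = 1}

/-- The outer measure on richer events induced by a measure `π` on `(Ω, m)`:
`π*(E) = inf {π F : F m-measurable, E ⊆ F}`. -/
noncomputable def outerM {Ω : Type*} (m : MeasurableSpace Ω) (π : @Measure Ω m)
    (E : Set Ω) : ℝ≥0∞ :=
  ⨅ (F : Set Ω) (_ : @MeasurableSet Ω m F ∧ E ⊆ F), π F

/-- Extended Bayesianism: there is a probability measure `π̄` on the finer σ-algebra `m1`
extending `π₀` (EB1) such that, whenever `π₀*(S₁) > 0`, `π̄(S₁) > 0` and `π₁` is the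
conditional of `π̄` on `S₁` (EB2). -/
def ExtendedBayesianism {Ω : Type*} (m0 m1 : MeasurableSpace Ω)
    (π₀ : @Measure Ω m0) (π₁ : @Measure Ω m1) : Prop :=
  ∃ πb : @Measure Ω m1, @IsProbabilityMeasure Ω m1 πb ∧
    (∀ E : Set Ω, @MeasurableSet Ω m0 E → πb E = π₀ E) ∧
    (0 < outerM m0 π₀ (spt m1 π₁) →
      0 < πb (spt m1 π₁) ∧
      ∀ E : Set Ω, @MeasurableSet Ω m1 E →
        π₁ E = πb (E ∩ spt m1 π₁) / πb (spt m1 π₁))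

/-- `π₁` is commensurate to `π₀`: for all `E, F ∈ Σ₀` with `E ⊆ S₁`,
(C1) `π₀ F = 0 → π₁ F = 0` and (C2) `π₀ E * π₁ F ≤ π₁ E * π₀ F`. -/
def Commensurate {Ω : Type*} (m0 m1 : MeasurableSpace Ω)
    (π₀ : @Measure Ω m0) (π₁ : @Measure Ω m1) : Prop :=
  ∀ E F : Set Ω, @MeasurableSet Ω m0 E → @MeasurableSet Ω m0 F → E ⊆ spt m1 π₁ →
    (π₀ F = 0 → π₁ F = 0) ∧ π₀ E * π₁ F ≤ π₁ E * π₀ F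

/-- `π₁` is boundedly commensurate to `π₀`: commensurate, and in addition (C3)
`inf {π₀ F / π₁ F : F ∈ Σ₀, π₁ F > 0} > 0`. -/
def BoundedlyCommensurate {Ω : Type*} (m0 m1 : MeasurableSpace Ω)
    (π₀ : @Measure Ω m0) (π₁ : @Measure Ω m1) : Prop :=
  Commensurate m0 m1 π₀ π₁ ∧
    0 < ⨅ (F : Set Ω) (_ : @MeasurableSet Ω m0 F ∧ 0 < π₁ F), π₀ F / π₁ F

/-! A reversal against a bet on `F ⊆ S₁` is impossible: it would yield a `π₁`-null set `G ⊆ F ⊆ S₁`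
of positive outer measure, but the support meets no null set, so `G = ∅`. Hence every weak
preference for a bet on an event inside `S₁` passes from `π₀` to `π₁`. Comparing with the bet on
`∅` gives (C1). For (C2), stake `π₀ F` on `E` and `π₀ E` on `F`: under `π₀` the two bets are
indifferent. -/

/-- Extension consistency of `π₁` with `π₀`, in terms of bets: a bet paying `a` on `F` is worth
`a * π F`, and if it is weakly preferred under `π₀` to the bet paying `b` on `E` while the
preference is reversed under `π₁`, then `π₁` has discarded a part `G` of `F` that is not negligible
for `π₀`. The stakes range over `NNReal`, so all values are compared in `ℝ≥0∞`. -/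
def ExtensionConsistent {Ω : Type*} (m0 m1 : MeasurableSpace Ω)
    (π₀ : @Measure Ω m0) (π₁ : @Measure Ω m1) : Prop :=
  ∀ (a b : NNReal) (E F : Set Ω), MeasurableSet[m0] E → MeasurableSet[m0] F →
    b * π₀ E ≤ a * π₀ F → a * π₁ F < b * π₁ E →
    ∃ G : Set Ω, MeasurableSet[m1] G ∧ G ⊆ F ∧ π₁ G = 0 ∧ 0 < outerM m0 π₀ G

theorem outerM_eq_measure {Ω : Type*} {m : MeasurableSpace Ω} (π : Measure Ω) (E : Set Ω) :
    outerM m π E = π E := by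
  simp only [outerM, measure_eq_iInf E, iInf_and]
  exact iInf_congr fun F ↦ iInf_comm

theorem disjoint_spt_of_measure_eq_zero {Ω : Type*} {m : MeasurableSpace Ω} {π : Measure Ω}
    [IsProbabilityMeasure π] {G : Set Ω} (hG : π G = 0) : Disjoint G (spt m π) := by
  obtain ⟨N, hGN, hN, hN0⟩ := exists_measurable_superset_of_null hG
  have hspt : spt m π ⊆ Nᶜ := sInter_subset_of_mem ⟨hN.compl, (prob_compl_eq_one_iff hN).mpr hN0⟩
  exact disjoint_compl_right.mono hGN hspt

section

variable {Ω : Type*} {m0 m1 : MeasurableSpace Ω} {π₀ : @Measure Ω m0} {π₁ : @Measure Ω m1}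
  [IsProbabilityMeasure π₁]

theorem ExtensionConsistent.mul_measure_le_of_subset_spt (hcons : ExtensionConsistent m0 m1 π₀ π₁)
    {a b : NNReal} {E F : Set Ω} (hE : MeasurableSet[m0] E) (hF : MeasurableSet[m0] F)
    (hFS : F ⊆ spt m1 π₁) (hle : b * π₀ E ≤ a * π₀ F) : b * π₁ E ≤ a * π₁ F := by
  by_contra! hlt
  obtain ⟨G, -, hGF, hG0, hGpos⟩ := hcons a b E F hE hF hle hlt
  have hG : G = ∅ := (disjoint_spt_of_measure_eq_zero hG0).eq_bot_of_le (hGF.trans hFS)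
  simp [hG, outerM_eq_measure] at hGpos

theorem commensurate_of_extension_consistent_general [IsFiniteMeasure π₀]
    (hcons : ExtensionConsistent m0 m1 π₀ π₁) : Commensurate m0 m1 π₀ π₁ := by
  refine fun E F hE hF hES ↦ ⟨fun hF0 ↦ ?_, ?_⟩
  · have hF_le_empty := hcons.mul_measure_le_of_subset_spt (a := 0) (b := 1) hF
      (@MeasurableSet.empty Ω m0) (empty_subset _) (by simp [hF0])
    simpa using hF_le_empty
  · have hstakes := hcons.mul_measure_le_of_subset_spt (a := (π₀ F).toNNReal)
      (b := (π₀ E).toNNReal) hF hE hES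
    simp only [coe_toNNReal (measure_ne_top π₀ _)] at hstakes
    exact (hstakes (mul_comm _ _).le).trans_eq (mul_comm _ _)

end

/-- if every preference reversal over bets implies the existence of a
discarded sub-event (`G ∈ Σ₁`, `G ⊆ F`, `π₁ G = 0`, `π₀* G > 0`), then `π₁` is
commensurate to `π₀`. -/
theorem commensurate_of_extension_consistent {Ω : Type*} [Finite Ω]
    (m0 m1 : MeasurableSpace Ω) (hle : m0 ≤ m1)
    (π₀ : @Measure Ω m0) (π₁ : @Measure Ω m1)
    (h₀ : @IsProbabilityMeasure Ω m0 π₀) (h₁ : @IsProbabilityMeasure Ω m1 π₁)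
    (hcons : ∀ (a b : NNReal) (E F : Set Ω),
      @MeasurableSet Ω m0 E → @MeasurableSet Ω m0 F →
      (b : ℝ≥0∞) * π₀ E ≤ (a : ℝ≥0∞) * π₀ F →
      (a : ℝ≥0∞) * π₁ F < (b : ℝ≥0∞) * π₁ E →
      ∃ G : Set Ω, @MeasurableSet Ω m1 G ∧ G ⊆ F ∧ π₁ G = 0 ∧ 0 < outerM m0 π₀ G) :
    Commensurate m0 m1 π₀ π₁ :=
  commensurate_of_extension_consistent_general hcons
end

section
/- Let Ω be an at most countable set. Then π₁ is boundedly commensurate to π₀ if and only if (π₀,π₁) satisfies extended Bayesianism and π₀*(S₁) > 0. -/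
open MeasureTheory Set ENNReal

/-! If `π₁` is the conditional of an extension `μ` of `π₀` given `S₁`, then
`π₀ F ≥ μ (F ∩ S₁) = μ S₁ * π₁ F` on `Σ₀`, with equality for `F ⊆ S₁`, and bounded commensurateness
follows. Conversely, let `c > 0` be the infimum in (C3). By (C2) and the definition of `c`,
`c * π₁ ≤ π₀` on `Σ₀`, again with equality on the events contained in `S₁`, so the remainder
`π₀ - c * π₁` is a measure on `Σ₀` vanishing on these events. Since `Ω` is countable, `Σ₀` is
generated by its atoms; moving the remainder's mass on each atom to a single point, outside `S₁`
whenever the atom has one, extends it to a measure `ν` on `Σ₁` with `ν S₁ = 0`. Then `c * π₁ + ν`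
extends `π₀` and has conditional `π₁` given `S₁`. -/

open scoped ProbabilityTheory

section MeasurableAtoms

variable {Ω : Type*} [Countable Ω]

lemma measurableSet_of_measurableAtom_subset [MeasurableSpace Ω] {s : Set Ω}
    (h : ∀ x ∈ s, measurableAtom x ⊆ s) : MeasurableSet s := by
  have hs : s = ⋃ x ∈ s, measurableAtom x :=
    Subset.antisymm (fun x hx ↦ mem_biUnion hx (mem_measurableAtom_self x)) (iUnion₂_subset h)
  rw [hs]
  exact .biUnion s.to_countable fun x _ ↦ .measurableAtom_of_countable x

lemma exists_measurable_mem_measurableAtom (m : MeasurableSpace Ω) (S : Set Ω) :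
    ∃ g : Ω → Ω, Measurable[m, ⊤] g ∧ (∀ x, g x ∈ measurableAtom x) ∧
      ∀ x, g x ∈ S → measurableAtom x ⊆ S := by
  have exists_rep (A : Set Ω) (hA : A.Nonempty) : ∃ y ∈ A, y ∈ S → A ⊆ S := by
    by_cases hAS : A ⊆ S
    · exact hA.imp fun y hy ↦ ⟨hy, fun _ ↦ hAS⟩
    · obtain ⟨y, hyA, hyS⟩ := not_subset.1 hAS
      exact ⟨y, hyA, fun hy ↦ absurd hy hyS⟩
  choose rep rep_mem rep_subset using exists_rep
  have atom_nonempty (x : Ω) : (measurableAtom x).Nonempty := ⟨x, mem_measurableAtom_self x⟩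
  refine ⟨fun x ↦ rep (measurableAtom x) (atom_nonempty x), fun B _ ↦ ?_,
    fun x ↦ rep_mem _ (atom_nonempty x), fun x ↦ rep_subset _ (atom_nonempty x)⟩
  refine measurableSet_of_measurableAtom_subset fun x hx y hy ↦ ?_
  simpa only [mem_preimage, measurableAtom_eq_of_mem hy] using hx

lemma preimage_eq_of_mem_measurableAtom {α : Type*} {m : MeasurableSpace α} {g : α → α}
    (hg : ∀ x, g x ∈ measurableAtom x) {F : Set α} (hF : MeasurableSet F) : g ⁻¹' F = F := by
  ext x
  refine ⟨fun hx ↦ ?_, fun hx ↦ mem_of_mem_measurableAtom (hg x) hF hx⟩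
  by_contra hxF
  exact mem_of_mem_measurableAtom (hg x) hF.compl hxF hx

lemma exists_trim_eq_and_measure_eq_zero {m0 m1 : MeasurableSpace Ω} (hle : m0 ≤ m1)
    (ν : Measure[m0] Ω) {S : Set Ω} (hS : MeasurableSet[m1] S)
    (hν : ∀ T ⊆ S, MeasurableSet[m0] T → ν T = 0) :
    ∃ ν' : Measure[m1] Ω, ν'.trim hle = ν ∧ ν' S = 0 := by
  obtain ⟨g, hg, hg_mem, hg_subset⟩ := exists_measurable_mem_measurableAtom m0 S
  have hg : Measurable[m0, m1] g := hg.mono le_rfl le_top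
  refine ⟨@Measure.map _ _ m0 m1 g ν, @Measure.ext _ m0 _ _ fun F hF ↦ ?_, ?_⟩
  · rw [trim_measurableSet_eq hle hF, Measure.map_apply hg (hle F hF),
      preimage_eq_of_mem_measurableAtom hg_mem hF]
  · rw [Measure.map_apply hg hS]
    exact hν _ (fun x hx ↦ hg_subset x hx (@mem_measurableAtom_self _ m0 x)) (hg hS)

end MeasurableAtoms

section Support

variable {Ω : Type*} [Countable Ω] [m : MeasurableSpace Ω]

lemma measurableSet_spt (π : Measure Ω) : MeasurableSet (spt m π) :=
  measurableSet_of_measurableAtom_subset fun _ hx ↦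
    subset_sInter fun _ hE ↦ measurableAtom_subset hE.1 (hx _ hE)

lemma ae_mem_spt (π : Measure Ω) [IsProbabilityMeasure π] : ∀ᵐ x ∂π, x ∈ spt m π := by
  refine ae_iff_of_countable.2 fun x hx E hE ↦ ?_
  by_contra hxE
  exact hx (measure_mono_null (singleton_subset_iff.2 hxE) ((prob_compl_eq_zero_iff hE.1).2 hE.2))

lemma measure_spt (π : Measure Ω) [IsProbabilityMeasure π] : π (spt m π) = 1 :=
  (mem_ae_iff_prob_eq_one (measurableSet_spt π)).1 (ae_mem_spt π)

end Support

section Extension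

variable {Ω : Type*} {m0 m1 : MeasurableSpace Ω}

lemma isProbabilityMeasure_of_trim (hle : m0 ≤ m1) {μ : Measure[m1] Ω}
    (h : IsProbabilityMeasure (μ.trim hle)) : IsProbabilityMeasure μ :=
  ⟨by rw [← trim_measurableSet_eq hle .univ, h.measure_univ]⟩

lemma measure_pos_of_cond_eq {α : Type*} {m : MeasurableSpace α} {μ ν : Measure α} [NeZero ν]
    {S : Set α} (h : μ[|S] = ν) : 0 < μ S := by
  refine pos_iff_ne_zero.2 fun h_zero ↦ NeZero.ne ν ?_
  rw [← h, ProbabilityTheory.cond_eq_zero_of_meas_eq_zero h_zero]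

lemma exists_trim_eq_and_measure_eq_of_subset [Countable Ω] (hle : m0 ≤ m1) {π : Measure[m0] Ω}
    {μ : Measure[m1] Ω} [IsFiniteMeasure μ] {S : Set Ω} (hS : MeasurableSet[m1] S)
    (h_le : μ.trim hle ≤ π) (h_eq : ∀ T ⊆ S, MeasurableSet[m0] T → π T = μ T) :
    ∃ μ' : Measure[m1] Ω, μ'.trim hle = π ∧ ∀ E ⊆ S, μ' E = μ E := by
  have remainder_null (T : Set Ω) (hTS : T ⊆ S) (hT : MeasurableSet[m0] T) :
      (π - μ.trim hle) T = 0 := by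
    rw [Measure.sub_apply hT h_le, trim_measurableSet_eq hle hT, h_eq T hTS hT, tsub_self]
  obtain ⟨ν, hν_trim, hνS⟩ := exists_trim_eq_and_measure_eq_zero hle _ hS remainder_null
  refine ⟨ν + μ, ?_, fun E hE ↦ ?_⟩
  · rw [trim_add, hν_trim, Measure.sub_add_cancel_of_le h_le]
  · rw [Measure.add_apply, measure_mono_null hE hνS, zero_add]

lemma measure_le_outerM_trim (hle : m0 ≤ m1) (μ : Measure[m1] Ω) (S : Set Ω) :
    μ S ≤ outerM m0 (μ.trim hle) S :=
  le_iInf₂ fun _ hF ↦ (measure_mono hF.2).trans (le_trim hle)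

lemma extendedBayesianism_and_outerM_pos_iff (hle : m0 ≤ m1) {π₀ : Measure[m0] Ω}
    {π₁ : Measure[m1] Ω} [IsProbabilityMeasure π₀] [NeZero π₁] :
    ExtendedBayesianism m0 m1 π₀ π₁ ∧ 0 < outerM m0 π₀ (spt m1 π₁) ↔
      ∃ μ : Measure[m1] Ω, μ.trim hle = π₀ ∧ μ[|spt m1 π₁] = π₁ := by
  have cond_apply_eq_div (μ : Measure[m1] Ω) {E : Set Ω} (hE : MeasurableSet[m1] E) :
      μ[|spt m1 π₁] E = μ (E ∩ spt m1 π₁) / μ (spt m1 π₁) := by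
    rw [ProbabilityTheory.cond_apply' hE, inter_comm, ENNReal.div_eq_inv_mul]
  constructor
  · rintro ⟨⟨μ, -, h_ext, h_cond⟩, h_pos⟩
    refine ⟨μ, @Measure.ext _ m0 _ _ fun E hE ↦ ?_, Measure.ext fun E hE ↦ ?_⟩
    · rw [trim_measurableSet_eq hle hE, h_ext E hE]
    · rw [cond_apply_eq_div μ hE, (h_cond h_pos).2 E hE]
  · rintro ⟨μ, rfl, h_cond⟩
    have h_pos := measure_pos_of_cond_eq h_cond
    refine ⟨⟨μ, isProbabilityMeasure_of_trim hle ‹_›,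
      fun E hE ↦ (trim_measurableSet_eq hle hE).symm, fun _ ↦ ⟨h_pos, fun E hE ↦ ?_⟩⟩,
      h_pos.trans_le (measure_le_outerM_trim hle μ _)⟩
    rw [← cond_apply_eq_div μ hE, h_cond]

end Extension

section MinRatio

variable {Ω : Type*} {m0 m1 : MeasurableSpace Ω}

/-- The infimum in (C3), with values in `ℝ≥0∞`: the largest `c` such that `c * π₁ ≤ π₀` on the
events of `m0` (see `le_minRatio_iff`). -/
noncomputable def minRatio (π₀ : Measure[m0] Ω) (π₁ : Measure[m1] Ω) : ℝ≥0∞ :=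
  ⨅ (F : Set Ω) (_ : MeasurableSet[m0] F ∧ 0 < π₁ F), π₀ F / π₁ F

variable {π₀ : Measure[m0] Ω} {π₁ : Measure[m1] Ω}

lemma le_minRatio_iff [IsFiniteMeasure π₁] {c : ℝ≥0∞} :
    c ≤ minRatio π₀ π₁ ↔ ∀ F, MeasurableSet[m0] F → c * π₁ F ≤ π₀ F := by
  have le_div_iff {F : Set Ω} (hF : 0 < π₁ F) : c ≤ π₀ F / π₁ F ↔ c * π₁ F ≤ π₀ F :=
    ENNReal.le_div_iff_mul_le (.inl hF.ne') (.inl (measure_ne_top π₁ F))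
  refine le_iInf₂_iff.trans ⟨fun h F hF ↦ ?_, fun h F hF ↦ (le_div_iff hF.2).2 (h F hF.1)⟩
  rcases eq_zero_or_pos (π₁ F) with hF₀ | hF₀
  · simp [hF₀]
  · exact (le_div_iff hF₀).1 (h F ⟨hF, hF₀⟩)

lemma minRatio_mul_le [IsFiniteMeasure π₁] {F : Set Ω} (hF : MeasurableSet[m0] F) :
    minRatio π₀ π₁ * π₁ F ≤ π₀ F :=
  le_minRatio_iff.1 le_rfl F hF

lemma minRatio_ne_top [IsFiniteMeasure π₀] [IsFiniteMeasure π₁] [NeZero π₁] :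
    minRatio π₀ π₁ ≠ ∞ := by
  intro h_top
  have h_le : minRatio π₀ π₁ * π₁ univ ≤ π₀ univ := minRatio_mul_le .univ
  rw [h_top, ENNReal.top_mul (NeZero.ne _)] at h_le
  exact measure_ne_top π₀ univ (top_le_iff.1 h_le)

lemma Commensurate.minRatio_mul_eq [IsFiniteMeasure π₁] [NeZero π₁]
    (h : Commensurate m0 m1 π₀ π₁) {E : Set Ω} (hE : MeasurableSet[m0] E) (hES : E ⊆ spt m1 π₁) :
    minRatio π₀ π₁ * π₁ E = π₀ E := by
  refine (minRatio_mul_le hE).antisymm ?_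
  rcases eq_or_ne (π₁ E) 0 with hE₀ | hE₀
  · simpa [hE₀, NeZero.ne π₁] using (h E univ hE .univ hES).2
  · rw [← ENNReal.div_le_iff hE₀ (measure_ne_top π₁ E), le_minRatio_iff]
    intro F hF
    rw [ENNReal.mul_comm_div, ← mul_div_assoc]
    exact ENNReal.div_le_of_le_mul' (h E F hE hF hES).2

lemma BoundedlyCommensurate.exists_trim_eq_and_cond_eq [Countable Ω] [IsFiniteMeasure π₀]
    [IsProbabilityMeasure π₁] (hle : m0 ≤ m1) (h : BoundedlyCommensurate m0 m1 π₀ π₁) :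
    ∃ μ : Measure[m1] Ω, μ.trim hle = π₀ ∧ μ[|spt m1 π₁] = π₁ := by
  obtain ⟨h_comm, h_pos : 0 < minRatio π₀ π₁⟩ := h
  set c := minRatio π₀ π₁
  have hc : c ≠ ∞ := minRatio_ne_top
  have := π₁.smul_finite hc
  have h_le : (c • π₁).trim hle ≤ π₀ := (@Measure.le_iff _ m0 _ _).2 fun F hF ↦ by
    rw [trim_measurableSet_eq hle hF]
    exact minRatio_mul_le hF
  obtain ⟨μ, hμ_trim, hμ⟩ := exists_trim_eq_and_measure_eq_of_subset hle (measurableSet_spt π₁) h_le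
    fun T hTS hT ↦ (h_comm.minRatio_mul_eq hT hTS).symm
  refine ⟨μ, hμ_trim, Measure.ext fun E hE ↦ ?_⟩
  have hES : π₁ (spt m1 π₁ ∩ E) = π₁ E := by
    rw [inter_comm]
    exact measure_inter_conull (ae_mem_spt π₁)
  rw [ProbabilityTheory.cond_apply' hE, hμ _ Subset.rfl, hμ _ inter_subset_left]
  simp only [Measure.smul_apply, smul_eq_mul]
  rw [measure_spt, mul_one, hES, ENNReal.inv_mul_cancel_left h_pos.ne' hc]

end MinRatio

lemma boundedlyCommensurate_trim_of_cond_eq {Ω : Type*} {m0 m1 : MeasurableSpace Ω}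
    (hle : m0 ≤ m1) {μ π₁ : Measure[m1] Ω} [IsFiniteMeasure μ] [NeZero π₁]
    (h : μ[|spt m1 π₁] = π₁) : BoundedlyCommensurate m0 m1 (μ.trim hle) π₁ := by
  have : IsFiniteMeasure π₁ := h ▸ inferInstance
  have h_pos := measure_pos_of_cond_eq h
  have measure_inter {F : Set Ω} (hF : MeasurableSet[m0] F) :
      μ (spt m1 π₁) * π₁ F = μ (spt m1 π₁ ∩ F) := by
    nth_rw 2 [← h]
    rw [ProbabilityTheory.cond_apply' (hle F hF),
      ENNReal.mul_inv_cancel_left h_pos.ne' (measure_ne_top μ _)]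
  have mul_le {F : Set Ω} (hF : MeasurableSet[m0] F) :
      μ (spt m1 π₁) * π₁ F ≤ μ.trim hle F := by
    rw [measure_inter hF, trim_measurableSet_eq hle hF]
    exact measure_mono inter_subset_right
  refine ⟨fun E F hE hF hES ↦ ⟨fun hF₀ ↦ ?_, ?_⟩, h_pos.trans_le (le_minRatio_iff.2 fun _ ↦ mul_le)⟩
  · rw [← h]
    exact ProbabilityTheory.cond_absolutelyContinuous (measure_eq_zero_of_trim_eq_zero hle hF₀)
  · calc μ.trim hle E * π₁ F = μ (spt m1 π₁) * π₁ E * π₁ F := by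
          rw [measure_inter hE, inter_eq_right.2 hES, trim_measurableSet_eq hle hE]
      _ = π₁ E * (μ (spt m1 π₁) * π₁ F) := by ring
      _ ≤ π₁ E * μ.trim hle F := by gcongr; exact mul_le hF

/-- Theorem 3: for an at most countable `Ω`, `π₁` is boundedly
commensurate to `π₀` iff `(π₀, π₁)` satisfies extended Bayesianism and `π₀*(S₁) > 0`. -/
theorem boundedlyCommensurate_iff_extendedBayesianism {Ω : Type*} [Countable Ω]
    (m0 m1 : MeasurableSpace Ω) (hle : m0 ≤ m1)
    (π₀ : @Measure Ω m0) (π₁ : @Measure Ω m1)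
    (h₀ : @IsProbabilityMeasure Ω m0 π₀) (h₁ : @IsProbabilityMeasure Ω m1 π₁) :
    BoundedlyCommensurate m0 m1 π₀ π₁ ↔
      ExtendedBayesianism m0 m1 π₀ π₁ ∧ 0 < outerM m0 π₀ (spt m1 π₁) := by
  rw [extendedBayesianism_and_outerM_pos_iff hle]
  constructor
  · exact fun h ↦ h.exists_trim_eq_and_cond_eq hle
  · rintro ⟨μ, rfl, hμ⟩
    have := isProbabilityMeasure_of_trim hle h₀
    exact boundedlyCommensurate_trim_of_cond_eq hle hμ
end
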